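/- arXiv:2201.13112 — 3 statements merged into one kernel-verified Lean document; each statement's English description precedes it below -/
import Mathlib

section
/- Let X and Ω be finite nonempty sets, p* and p† probability vectors on Ω, ε > 0 with d(p†, p*) ≤ ε, g : X × Ω → ℝ, h ∈ ℝ, α ∈ (0,1), and ξ > 0 with 2ε < ξ. Define G_t(x) = inf_{p ∈ A(p*, ε)} ∑_{w ∈ Ω} 1[g(x,w) > h] p(w) and G̃(x) = ∑_{w ∈ Ω} 1[g(x,w) > h] p†(w). If G_t(x) ≤ α − ξ for every x ∈ X, then G̃(x) < α for every x ∈ X; that is, if no design is feasible for the distributionally robust chance constraint at level α − ξ, then the chance-constrained problem at level α under the true distribution p† has no feasible point. -/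
open Finset

/-- A probability vector on a finite set `Ω`. -/
def IsProbVec {Ω : Type*} [Fintype Ω] (p : Ω → ℝ) : Prop :=
  (∀ w, 0 ≤ p w) ∧ ∑ w, p w = 1

/-- The L1 ambiguity set of radius `ε` around a reference distribution `pstar`. -/
def AmbiguitySet {Ω : Type*} [Fintype Ω] (pstar : Ω → ℝ) (ε : ℝ) : Set (Ω → ℝ) :=
  {p | IsProbVec p ∧ ∑ w, |p w - pstar w| ≤ ε}

/-!
Two members of the ambiguity set are at L1 distance at most `2ε`. Since both have total mass `1`,
the function being averaged may be shifted by a constant; centring a function with values in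
`[a, b]` at `(a + b) / 2` bounds it by `(b - a) / 2`, so its means under the two members differ by
at most `(b - a) ε`. For an indicator this is `ε`, hence `G̃ x ≤ G_t x + ε`.
-/

theorem abs_sum_mul_sub_sum_mul_le_of_sum_eq {ι 𝕜 : Type*} [Field 𝕜] [LinearOrder 𝕜]
    [IsStrictOrderedRing 𝕜] {s : Finset ι} {f p q : ι → 𝕜} {a b : 𝕜}
    (hf : ∀ i ∈ s, f i ∈ Set.Icc a b) (hpq : ∑ i ∈ s, p i = ∑ i ∈ s, q i) :
    |∑ i ∈ s, f i * p i - ∑ i ∈ s, f i * q i| ≤ (b - a) / 2 * ∑ i ∈ s, |p i - q i| := by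
  have centred : ∑ i ∈ s, f i * p i - ∑ i ∈ s, f i * q i =
      ∑ i ∈ s, (f i - (a + b) / 2) * (p i - q i) := by
    simp only [sub_mul, mul_sub, sum_sub_distrib, ← mul_sum, hpq]
    ring
  have abs_centred_le : ∀ i ∈ s, |f i - (a + b) / 2| ≤ (b - a) / 2 := fun i hi ↦ by
    obtain ⟨ha, hb⟩ := hf i hi
    exact abs_le.2 ⟨by linarith, by linarith⟩
  calc |∑ i ∈ s, f i * p i - ∑ i ∈ s, f i * q i|
      ≤ ∑ i ∈ s, |(f i - (a + b) / 2) * (p i - q i)| := centred ▸ abs_sum_le_sum_abs _ _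
    _ = ∑ i ∈ s, |f i - (a + b) / 2| * |p i - q i| := by simp only [abs_mul]
    _ ≤ ∑ i ∈ s, (b - a) / 2 * |p i - q i| := by
      gcongr with i hi
      exact abs_centred_le i hi
    _ = (b - a) / 2 * ∑ i ∈ s, |p i - q i| := (mul_sum ..).symm

theorem sum_abs_sub_le_add {ι G : Type*} [AddCommGroup G] [LinearOrder G]
    [IsOrderedAddMonoid G] (s : Finset ι) (p q r : ι → G) :
    ∑ i ∈ s, |p i - r i| ≤ ∑ i ∈ s, |p i - q i| + ∑ i ∈ s, |q i - r i| := by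
  rw [← sum_add_distrib]
  gcongr with i
  exact abs_sub_le ..

theorem IsProbVec.nonempty {Ω : Type*} [Fintype Ω] {p : Ω → ℝ} (hp : IsProbVec p) :
    Nonempty Ω :=
  univ_nonempty_iff.1 <| nonempty_of_sum_ne_zero <| hp.2.trans_ne one_ne_zero

namespace AmbiguitySet

variable {Ω : Type*} [Fintype Ω] {pstar p q f : Ω → ℝ} {ε a b : ℝ}

theorem sum_abs_sub_le (hp : p ∈ AmbiguitySet pstar ε) (hq : q ∈ AmbiguitySet pstar ε) :
    ∑ w, |p w - q w| ≤ 2 * ε :=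
  calc ∑ w, |p w - q w|
      ≤ ∑ w, |p w - pstar w| + ∑ w, |pstar w - q w| := sum_abs_sub_le_add ..
    _ = ∑ w, |p w - pstar w| + ∑ w, |q w - pstar w| := by simp only [abs_sub_comm (pstar _)]
    _ ≤ ε + ε := add_le_add hp.2 hq.2
    _ = 2 * ε := (two_mul ε).symm

theorem abs_sum_mul_sub_sum_mul_le (hf : ∀ w, f w ∈ Set.Icc a b)
    (hp : p ∈ AmbiguitySet pstar ε) (hq : q ∈ AmbiguitySet pstar ε) :
    |∑ w, f w * p w - ∑ w, f w * q w| ≤ (b - a) * ε := by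
  obtain ⟨w⟩ := hp.1.nonempty
  have width_nonneg : 0 ≤ b - a := sub_nonneg.2 ((hf w).1.trans (hf w).2)
  calc |∑ w, f w * p w - ∑ w, f w * q w|
      ≤ (b - a) / 2 * ∑ w, |p w - q w| :=
        abs_sum_mul_sub_sum_mul_le_of_sum_eq (fun w _ ↦ hf w) (hp.1.2.trans hq.1.2.symm)
    _ ≤ (b - a) / 2 * (2 * ε) := by
        gcongr
        exact sum_abs_sub_le hp hq
    _ = (b - a) * ε := by ring

theorem sum_mul_le_sInf_add (hf : ∀ w, f w ∈ Set.Icc a b)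
    (hq : q ∈ AmbiguitySet pstar ε) :
    ∑ w, f w * q w ≤
      sInf ((fun p ↦ ∑ w, f w * p w) '' AmbiguitySet pstar ε) + (b - a) * ε := by
  rw [← sub_le_iff_le_add]
  refine le_csInf ⟨_, q, hq, rfl⟩ ?_
  rintro _ ⟨p, hp, rfl⟩
  exact sub_le_comm.1 (le_of_abs_le (abs_sum_mul_sub_sum_mul_le hf hq hp))

end AmbiguitySet

theorem drcc_infeasible_implies_cc_infeasible_general
    {X Ω : Type*} [Fintype Ω] (pstar pdag : Ω → ℝ) (hpdag : IsProbVec pdag)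
    (ε : ℝ) (hdist : ∑ w, |pdag w - pstar w| ≤ ε)
    (g : X → Ω → ℝ) (h α ξ : ℝ) (hεξ : ε < ξ)
    (Gt : X → ℝ)
    (hGt : ∀ x, Gt x =
      sInf ((fun p ↦ ∑ w, (if h < g x w then (1 : ℝ) else 0) * p w) '' AmbiguitySet pstar ε))
    (Gtil : X → ℝ)
    (hGtil : ∀ x, Gtil x = ∑ w, (if h < g x w then (1 : ℝ) else 0) * pdag w)
    (hinfeas : ∀ x, Gt x ≤ α - ξ) (x : X) :
    Gtil x < α := by
  have indicator_mem (w : Ω) : (if h < g x w then (1 : ℝ) else 0) ∈ Set.Icc 0 1 := by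
    split_ifs <;> simp
  have Gtil_le : Gtil x ≤ Gt x + (1 - 0) * ε := by
    rw [hGtil, hGt]
    exact AmbiguitySet.sum_mul_le_sInf_add indicator_mem ⟨hpdag, hdist⟩
  linarith [hinfeas x]

/-- If no design is feasible for the distributionally robust chance constraint at
level `α − ξ` (with `2ε < ξ`), then the chance-constrained problem at level `α`
under the true distribution `p†` has no feasible point. -/
theorem drcc_infeasible_implies_cc_infeasible
    {X : Type*} [Fintype X] [Nonempty X] {Ω : Type*} [Fintype Ω] [Nonempty Ω]
    (pstar pdag : Ω → ℝ) (hpstar : IsProbVec pstar) (hpdag : IsProbVec pdag)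
    (ε : ℝ) (hε : 0 < ε) (hdist : ∑ w, |pdag w - pstar w| ≤ ε)
    (g : X → Ω → ℝ) (h α ξ : ℝ) (hα : α ∈ Set.Ioo (0:ℝ) 1) (hξ : 0 < ξ) (hεξ : 2 * ε < ξ)
    (Gt : X → ℝ)
    (hGt : ∀ x, Gt x =
      sInf ((fun p => ∑ w, (if h < g x w then (1:ℝ) else 0) * p w) '' AmbiguitySet pstar ε))
    (Gtil : X → ℝ)
    (hGtil : ∀ x, Gtil x = ∑ w, (if h < g x w then (1:ℝ) else 0) * pdag w)
    (hinfeas : ∀ x : X, Gt x ≤ α - ξ) :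
    ∀ x : X, Gtil x < α := by
  exact drcc_infeasible_implies_cc_infeasible_general pstar pdag hpdag ε hdist g h α ξ
    (by linarith) Gt hGt Gtil hGtil hinfeas
end

section
/- Let X and Ω be finite nonempty sets, p* and p† probability vectors on Ω, and ε > 0 with d(p†, p*) ≤ ε. Let f, g : X × Ω → ℝ, B ≥ 0 with |f(x,w)| ≤ B for all (x,w) ∈ X × Ω, h ∈ ℝ, α ∈ (0,1), and ξ > 0 with 2ε < ξ and 2Bε < ξ. Define F_t(x) = inf_{p ∈ A(p*, ε)} ∑_{w} f(x,w) p(w), G_t(x) = inf_{p ∈ A(p*, ε)} ∑_{w} 1[g(x,w) > h] p(w), F̃(x) = ∑_{w} f(x,w) p†(w), and G̃(x) = ∑_{w} 1[g(x,w) > h] p†(w). Suppose the set S̃ = {x ∈ X : G̃(x) > α} is nonempty and x̃* ∈ S̃ maximizes F̃ over S̃. Then: (i) the set S = {x ∈ X : G_t(x) > α − ξ} is nonempty; and (ii) if x*_t ∈ S maximizes F_t over S and x̂ ∈ X satisfies G_t(x̂) > α − 3ξ and F_t(x*_t) − F_t(x̂) < 2ξ, then G̃(x̂) > α − 3ξ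 and F̃(x̃*) − F̃(x̂) < 3ξ. That is, any 2ξ-accurate solution of the distributionally robust chance-constrained problem at level α − ξ is a 3ξ-accurate solution of the chance-constrained problem at level α under the true distribution p†. -/
/-!
For `p` and `q` of equal total mass, the difference of the means of `φ : Ω → [a, b]` does not
change when `φ` is centred at `(a + b) / 2`, so it is at most `(b - a) / 2` times the L1 distance
of `p` and `q`. Two points of the ambiguity set are at distance at most `2 * ε`, hence the true
mean exceeds the worst-case mean by at most `(b - a) * ε`. With `[a, b] = [-B, B]` for the
objective and `[0, 1]` for the chance constraint, both gaps are at most `ξ`: a point feasible at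
level `α` is robustly feasible at level `α - ξ`, and passing from the robust to the true objective
costs at most `ξ`.
-/

open Finset

/-- The worst-case mean of `φ` over the ambiguity set, i.e. the robust counterpart of
`∑ w, φ w * p w`. As an `sInf` of reals it has the junk value `0` if the ambiguity set is empty. -/
noncomputable def worstCaseMean {Ω : Type*} [Fintype Ω] (pstar : Ω → ℝ) (ε : ℝ) (φ : Ω → ℝ) : ℝ :=
  sInf ((fun p => ∑ w, φ w * p w) '' AmbiguitySet pstar ε)

theorem abs_sum_mul_le_mul_sum_abs {ι R : Type*} [Ring R] [LinearOrder R]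
    [IsStrictOrderedRing R] (s : Finset ι) {c v : ι → R} {C : R} (hc : ∀ i ∈ s, |c i| ≤ C) :
    |∑ i ∈ s, c i * v i| ≤ C * ∑ i ∈ s, |v i| :=
  calc |∑ i ∈ s, c i * v i| ≤ ∑ i ∈ s, |c i * v i| := abs_sum_le_sum_abs _ _
    _ ≤ ∑ i ∈ s, C * |v i| := sum_le_sum fun i hi => by
      rw [abs_mul]
      exact mul_le_mul_of_nonneg_right (hc i hi) (abs_nonneg _)
    _ = C * ∑ i ∈ s, |v i| := (mul_sum _ _ _).symm

theorem abs_sum_mul_sub_sum_mul_le {ι R : Type*} [Field R] [LinearOrder R]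
    [IsStrictOrderedRing R] (s : Finset ι) {φ p q : ι → R} {a b : R}
    (hφ : ∀ i ∈ s, φ i ∈ Set.Icc a b) (hpq : ∑ i ∈ s, p i = ∑ i ∈ s, q i) :
    |∑ i ∈ s, φ i * p i - ∑ i ∈ s, φ i * q i| ≤ (b - a) / 2 * ∑ i ∈ s, |p i - q i| := by
  have centre : ∑ i ∈ s, φ i * p i - ∑ i ∈ s, φ i * q i =
      ∑ i ∈ s, (φ i - (a + b) / 2) * (p i - q i) := by
    simp only [sub_mul, mul_sub, sum_sub_distrib, ← mul_sum, hpq]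
    ring
  have radius : ∀ i ∈ s, |φ i - (a + b) / 2| ≤ (b - a) / 2 := fun i hi => by
    obtain ⟨ha, hb⟩ := hφ i hi
    rw [abs_le]
    constructor <;> linarith
  rw [centre]
  exact abs_sum_mul_le_mul_sum_abs s radius

section AmbiguitySet

variable {Ω : Type*} [Fintype Ω] {pstar p q φ : Ω → ℝ} {ε a b : ℝ}

theorem sum_abs_sub_le_of_mem_ambiguitySet (hp : p ∈ AmbiguitySet pstar ε)
    (hq : q ∈ AmbiguitySet pstar ε) : ∑ w, |p w - q w| ≤ 2 * ε :=
  calc ∑ w, |p w - q w| ≤ ∑ w, (|p w - pstar w| + |q w - pstar w|) :=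
        sum_le_sum fun w _ => abs_sub_comm (q w) (pstar w) ▸ abs_sub_le _ _ _
    _ = ∑ w, |p w - pstar w| + ∑ w, |q w - pstar w| := sum_add_distrib
    _ ≤ 2 * ε := by linarith [hp.2, hq.2]

theorem sum_mul_le_sum_mul_add_of_mem_ambiguitySet (hφ : ∀ w, φ w ∈ Set.Icc a b)
    (hp : p ∈ AmbiguitySet pstar ε) (hq : q ∈ AmbiguitySet pstar ε) :
    ∑ w, φ w * p w ≤ ∑ w, φ w * q w + (b - a) * ε := by
  have hab : a ≤ b := by
    obtain ⟨w, -⟩ := nonempty_of_sum_ne_zero (hp.1.2.trans_ne one_ne_zero)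
    exact (hφ w).1.trans (hφ w).2
  rw [← sub_le_iff_le_add']
  calc ∑ w, φ w * p w - ∑ w, φ w * q w ≤ (b - a) / 2 * ∑ w, |p w - q w| :=
        (le_abs_self _).trans <|
          abs_sum_mul_sub_sum_mul_le univ (fun w _ => hφ w) (hp.1.2.trans hq.1.2.symm)
    _ ≤ (b - a) / 2 * (2 * ε) :=
        mul_le_mul_of_nonneg_left (sum_abs_sub_le_of_mem_ambiguitySet hp hq) (by linarith)
    _ = (b - a) * ε := by ring

theorem bddBelow_image_ambiguitySet (pstar : Ω → ℝ) (ε : ℝ) (φ : Ω → ℝ) :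
    BddBelow ((fun p => ∑ w, φ w * p w) '' AmbiguitySet pstar ε) := by
  obtain ⟨m, hm⟩ := (Set.finite_range φ).bddBelow
  refine ⟨m, ?_⟩
  rintro _ ⟨p, ⟨⟨hp_nonneg, hp_sum⟩, -⟩, rfl⟩
  calc m = ∑ w, m * p w := by rw [← mul_sum, hp_sum, mul_one]
    _ ≤ ∑ w, φ w * p w := sum_le_sum fun w _ =>
        mul_le_mul_of_nonneg_right (hm (Set.mem_range_self w)) (hp_nonneg w)

theorem worstCaseMean_le (hp : p ∈ AmbiguitySet pstar ε) (φ : Ω → ℝ) :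
    worstCaseMean pstar ε φ ≤ ∑ w, φ w * p w :=
  csInf_le (bddBelow_image_ambiguitySet pstar ε φ) (Set.mem_image_of_mem _ hp)

theorem sum_mul_le_worstCaseMean_add (hφ : ∀ w, φ w ∈ Set.Icc a b)
    (hp : p ∈ AmbiguitySet pstar ε) :
    ∑ w, φ w * p w ≤ worstCaseMean pstar ε φ + (b - a) * ε := by
  rw [← sub_le_iff_le_add]
  refine le_csInf ⟨_, Set.mem_image_of_mem _ hp⟩ ?_
  rintro _ ⟨q, hq, rfl⟩
  exact sub_le_iff_le_add.2 (sum_mul_le_sum_mul_add_of_mem_ambiguitySet hφ hp hq)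

end AmbiguitySet

theorem drcc_accurate_implies_cc_accurate_general {X Ω : Type*} [Fintype Ω]
    {pstar pdag : Ω → ℝ} {ε : ℝ} (hpdag : pdag ∈ AmbiguitySet pstar ε)
    {f g : X → Ω → ℝ} {a b : ℝ} (hf : ∀ x w, f x w ∈ Set.Icc a b)
    {h α ξ : ℝ} (hεξ : ε ≤ ξ) (habεξ : (b - a) * ε ≤ ξ)
    {Ft Gt Ftil Gtil : X → ℝ}
    (hFt : ∀ x, Ft x = worstCaseMean pstar ε (f x))
    (hGt : ∀ x, Gt x = worstCaseMean pstar ε fun w => if h < g x w then 1 else 0)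
    (hFtil : ∀ x, Ftil x = ∑ w, f x w * pdag w)
    (hGtil : ∀ x, Gtil x = ∑ w, (if h < g x w then (1 : ℝ) else 0) * pdag w)
    {x₀ : X} (hx₀ : α < Gtil x₀) :
    (∃ x : X, α - ξ < Gt x) ∧
    ∀ xtstar : X, (α - ξ < Gt xtstar ∧ ∀ x : X, α - ξ < Gt x → Ft x ≤ Ft xtstar) →
      ∀ xhat : X, α - 3 * ξ < Gt xhat → Ft xtstar - Ft xhat < 2 * ξ →
        α - 3 * ξ < Gtil xhat ∧ Ftil x₀ - Ftil xhat < 3 * ξ := by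
  have hind (x : X) (w : Ω) : (if h < g x w then (1 : ℝ) else 0) ∈ Set.Icc 0 1 := by
    split_ifs <;> simp
  have Ft_le (x : X) : Ft x ≤ Ftil x := hFt x ▸ hFtil x ▸ worstCaseMean_le hpdag _
  have Gt_le (x : X) : Gt x ≤ Gtil x := hGt x ▸ hGtil x ▸ worstCaseMean_le hpdag _
  have Ftil_le (x : X) : Ftil x ≤ Ft x + (b - a) * ε :=
    hFt x ▸ hFtil x ▸ sum_mul_le_worstCaseMean_add (hf x) hpdag
  have Gtil_le (x : X) : Gtil x ≤ Gt x + (1 - 0) * ε :=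
    hGt x ▸ hGtil x ▸ sum_mul_le_worstCaseMean_add (hind x) hpdag
  have robust_feasible : α - ξ < Gt x₀ := by linarith [Gtil_le x₀]
  refine ⟨⟨x₀, robust_feasible⟩, fun xtstar ⟨_, hmax⟩ xhat hfeas hacc =>
    ⟨hfeas.trans_le (Gt_le xhat), ?_⟩⟩
  calc Ftil x₀ - Ftil xhat ≤ (Ft x₀ + (b - a) * ε) - Ft xhat :=
        sub_le_sub (Ftil_le x₀) (Ft_le xhat)
    _ ≤ (Ft xtstar + ξ) - Ft xhat := by gcongr; exact hmax x₀ robust_feasible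
    _ < 3 * ξ := by linarith

/-- Any `2ξ`-accurate solution of the distributionally robust chance-constrained
problem at level `α − ξ` is a `3ξ`-accurate solution of the chance-constrained
problem at level `α` under the true distribution `p†`. -/
theorem drcc_accurate_implies_cc_accurate
    {X : Type*} [Fintype X] [Nonempty X] {Ω : Type*} [Fintype Ω] [Nonempty Ω]
    (pstar pdag : Ω → ℝ) (hpstar : IsProbVec pstar) (hpdag : IsProbVec pdag)
    (ε : ℝ) (hε : 0 < ε) (hdist : ∑ w, |pdag w - pstar w| ≤ ε)
    (f g : X → Ω → ℝ) (B : ℝ) (hB : 0 ≤ B) (hfB : ∀ x w, |f x w| ≤ B)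
    (h α ξ : ℝ) (hα : α ∈ Set.Ioo (0:ℝ) 1) (hξ : 0 < ξ)
    (hεξ : 2 * ε < ξ) (hBεξ : 2 * B * ε < ξ)
    (Ft : X → ℝ)
    (hFt : ∀ x, Ft x = sInf ((fun p => ∑ w, f x w * p w) '' AmbiguitySet pstar ε))
    (Gt : X → ℝ)
    (hGt : ∀ x, Gt x =
      sInf ((fun p => ∑ w, (if h < g x w then (1:ℝ) else 0) * p w) '' AmbiguitySet pstar ε))
    (Ftil : X → ℝ) (hFtil : ∀ x, Ftil x = ∑ w, f x w * pdag w)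
    (Gtil : X → ℝ)
    (hGtil : ∀ x, Gtil x = ∑ w, (if h < g x w then (1:ℝ) else 0) * pdag w)
    (xtilstar : X) (hxts_feas : α < Gtil xtilstar)
    (hxts_max : ∀ x : X, α < Gtil x → Ftil x ≤ Ftil xtilstar) :
    (∃ x : X, α - ξ < Gt x) ∧
    ∀ xtstar : X, (α - ξ < Gt xtstar ∧ ∀ x : X, α - ξ < Gt x → Ft x ≤ Ft xtstar) →
      ∀ xhat : X, α - 3 * ξ < Gt xhat → Ft xtstar - Ft xhat < 2 * ξ →
        α - 3 * ξ < Gtil xhat ∧ Ftil xtilstar - Ftil xhat < 3 * ξ :=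
  drcc_accurate_implies_cc_accurate_general ⟨hpdag, hdist⟩ (fun x w => abs_le.1 (hfB x w))
    (by linarith) (by linarith) hFt hGt hFtil hGtil hxts_feas
end

section
/- Let Z be a set, k : Z × Z → ℝ a symmetric positive semidefinite kernel (i.e., for any finite list of points in Z the Gram matrix of k is positive semidefinite), σ² > 0, and let z₁, …, z_{n+1} ∈ Z and a test point z ∈ Z be given. For 1 ≤ j ≤ n+1 let K_j be the j × j matrix with entries k(z_a, z_b) for 1 ≤ a, b ≤ j, let k_j(z) ∈ ℝ^j have entries k(z, z_a), and define the Gaussian-process posterior variance σ_j²(z) = k(z,z) − k_j(z)ᵀ (K_j + σ² I_j)⁻¹ k_j(z), where I_j is the j × j identity matrix. Then σ_{n+1}²(z) ≤ σ_n²(z); that is, the posterior variance at any point is non-increasing as observations are added. -/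
/-!
Conditioning on observations takes a Schur complement, so everything rests on the fact that
`Bᴴ * A⁻¹ * B` can only shrink when rows of `B` and the matching rows and columns of `A` are
deleted. Indeed `[A, B; Bᴴ, Bᴴ * A⁻¹ * B]` has vanishing Schur complement, hence is positive
semidefinite. Deleting rows and columns preserves positive semidefiniteness, and the Schur
complement of what remains is exactly the asserted difference.
-/

open Matrix

theorem posSemidef_iff_forall_fin_submatrix {n R : Type*} [Ring R] [PartialOrder R] [StarRing R]
    {M : Matrix n n R} :
    M.PosSemidef ↔ ∀ (m : ℕ) (v : Fin m → n), (M.submatrix v v).PosSemidef := by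
  refine ⟨fun hM m v => hM.submatrix v, fun h => ⟨?_, fun x => ?_⟩⟩
  · ext i j
    exact (h 2 ![i, j]).isHermitian.apply 0 1
  · let v : Fin x.support.card → n := fun a => x.support.equivFin.symm a
    have hv : Function.Injective v :=
      Subtype.val_injective.comp x.support.equivFin.symm.injective
    have hrange : ↑x.support ⊆ Set.range v := fun i hi => ⟨x.support.equivFin ⟨i, hi⟩, by simp [v]⟩
    rw [← Finsupp.mapDomain_comapDomain v hv x hrange]
    simpa [Finsupp.sum_mapDomain_index, add_mul, mul_add] using
      (h _ v).2 (x.comapDomain v hv.injOn)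

section Field

variable {ι κ Z R : Type*} [Fintype ι] [Fintype κ] [DecidableEq ι] [DecidableEq κ]
  [Field R]

section SchurComplement

variable [PartialOrder R] [StarRing R] [StarOrderedRing R]

theorem posSemidef_fromBlocks_conjTranspose_mul_inv_mul {τ : Type*} [Finite τ]
    {A : Matrix κ κ R} (hA : A.PosDef) (B : Matrix κ τ R) :
    (fromBlocks A B Bᴴ (Bᴴ * A⁻¹ * B)).PosSemidef := by
  let := hA.isUnit.invertible
  rw [hA.fromBlocks₁₁, sub_self]
  exact .zero

theorem posSemidef_conjTranspose_mul_inv_mul_sub_submatrix {τ : Type*}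
    {A : Matrix κ κ R} (hA : A.PosDef) (B : Matrix κ τ R) {e : ι → κ}
    (he : Function.Injective e) :
    (Bᴴ * A⁻¹ * B -
      (B.submatrix e id)ᴴ * (A.submatrix e e)⁻¹ * B.submatrix e id).PosSemidef := by
  refine posSemidef_iff_forall_fin_submatrix.2 fun m v => ?_
  have hAe : (A.submatrix e e).PosDef := hA.submatrix he
  let := hAe.isUnit.invertible
  have hdeleted : (fromBlocks (A.submatrix e e) (B.submatrix e v) (B.submatrix e v)ᴴ
      ((B.submatrix id v)ᴴ * A⁻¹ * B.submatrix id v)).PosSemidef := by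
    convert (posSemidef_fromBlocks_conjTranspose_mul_inv_mul hA (B.submatrix id v)).submatrix
      (Sum.map e id) using 1
    ext (i | i) (j | j) <;> rfl
  exact (hAe.fromBlocks₁₁ _ _).1 hdeleted

end SchurComplement

/-- The posterior covariance kernel of a Gaussian process with prior covariance kernel `K`, after
observations at the points `z` whose noise has covariance matrix `N`. A kernel on `Z` is encoded as
a matrix indexed by the possibly infinite type `Z`. The posterior variance at `x` is the diagonal
entry `posteriorCov K N z x x`. -/
noncomputable def posteriorCov (K : Matrix Z Z R) (N : Matrix ι ι R) (z : ι → Z) : Matrix Z Z R :=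
  K - K.submatrix id z * (K.submatrix z z + N)⁻¹ * K.submatrix z id

theorem posteriorCov_apply (K : Matrix Z Z R) (N : Matrix ι ι R) (z : ι → Z) (x y : Z) :
    posteriorCov K N z x y =
      K x y - (fun a => K x (z a)) ⬝ᵥ ((K.submatrix z z + N)⁻¹ *ᵥ fun a => K (z a) y) := by
  rw [posteriorCov, Matrix.mul_assoc]
  rfl

theorem gp_posterior_variance_antitone_general [PartialOrder R] [StarRing R] [StarOrderedRing R]
    {K : Matrix Z Z R} (hK : K.PosSemidef) {N : Matrix κ κ R} (hN : N.PosDef) (z : κ → Z)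
    {e : ι → κ} (he : Function.Injective e) :
    (posteriorCov K (N.submatrix e e) (z ∘ e) - posteriorCov K N z).PosSemidef := by
  have hA : (K.submatrix z z + N).PosDef := .posSemidef_add (hK.submatrix z) hN
  have hdiff := posSemidef_conjTranspose_mul_inv_mul_sub_submatrix hA (K.submatrix z id) he
  simp only [conjTranspose_submatrix, hK.isHermitian.eq] at hdiff
  rwa [posteriorCov, posteriorCov, sub_sub_sub_cancel_left]

end Field

/-- The Gaussian-process posterior variance at any test point is non-increasing
as observations are added: with a symmetric positive semidefinite kernel `k`,
noise variance `σ² > 0`, and observation points `z₁, …, z_{n+1}`, the posterior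
variance after `n+1` observations is at most the posterior variance after the
first `n` observations. -/
theorem gp_posterior_variance_antitone
    {Z : Type*} (k : Z → Z → ℝ) (hsymm : ∀ a b, k a b = k b a)
    (hpsd : ∀ (m : ℕ) (v : Fin m → Z),
      (Matrix.of (fun a b => k (v a) (v b)) : Matrix (Fin m) (Fin m) ℝ).PosSemidef)
    (σ2 : ℝ) (hσ2 : 0 < σ2) (n : ℕ) (z : Fin (n + 1) → Z) (zt : Z)
    (postVar : (j : ℕ) → j ≤ n + 1 → ℝ)
    (hpostVar : ∀ (j : ℕ) (hj : j ≤ n + 1),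
      postVar j hj =
        k zt zt -
          (fun a : Fin j => k zt (z (Fin.castLE hj a))) ⬝ᵥ
            (((Matrix.of fun a b : Fin j => k (z (Fin.castLE hj a)) (z (Fin.castLE hj b))) +
                σ2 • (1 : Matrix (Fin j) (Fin j) ℝ))⁻¹ *ᵥ
              fun a : Fin j => k zt (z (Fin.castLE hj a)))) :
    postVar (n + 1) le_rfl ≤ postVar n (Nat.le_succ n) := by
  have hpost (j : ℕ) (hj : j ≤ n + 1) :
      postVar j hj = posteriorCov (of k) (σ2 • 1) (z ∘ Fin.castLE hj) zt zt := by
    rw [hpostVar, posteriorCov_apply]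
    simp only [of_apply, hsymm _ zt]
    rfl
  have hdiff := gp_posterior_variance_antitone_general (K := of k)
    (posSemidef_iff_forall_fin_submatrix.2 hpsd) (PosDef.one.smul hσ2) z
    (Fin.castLE_injective n.le_succ)
  simp only [submatrix_smul, Pi.smul_apply, submatrix_one _ (Fin.castLE_injective _)] at hdiff
  rw [hpost, hpost]
  exact sub_nonneg.1 hdiff.diag_nonneg
end
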